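/- Let k, m be positive integers and let i, j be integers with 0 ≤ j < i ≤ k. For any strictly increasing sequence 1 ≤ ℓ_1 < ℓ_2 < … < ℓ_{k−j} ≤ k, the complete homogeneous symmetric polynomial h_{m+i}(x_{ℓ_1},…,x_{ℓ_{k−j}}) of degree m+i in the k−j indicated variables vanishes in R(k,m). -/

import Mathlib

/-!
The recurrence `h_{d+1}(x, l) = h_{d+1}(l) + x * h_d(x, l)` is used in two directions.

Adding variables: for every `p ≤ k`, `h_n(x_1, …, x_p)` vanishes in `R(k,m)` for all
`n > m + (k - p)`. This is trivial for `p = 0`. For `p > 0`, the case `n = m + (k - p) + 1` is a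
defining relation, and larger `n` follow by
induction on `p` and `n` (`completeHomog_prefix_eq_zero`). For `p = k` this says
`h_n(x_1, …, x_k) = 0` for all `n > m`.

Removing variables: rewriting the recurrence as `h_{d+1}(l) = h_{d+1}(x, l) - x * h_d(x, l)`, each
variable removed from the full list raises the vanishing bound by one
(`completeHomog_eq_zero_of_append`). Since `h_d` is symmetric (`completeHomog_perm`), the removed
variables may be arbitrary; removing `j` of them leaves vanishing in all degrees `> m + j`.
-/

open scoped TensorProduct

/-- Complete homogeneous symmetric polynomial of degree `d` in a list of elements
of a commutative (semi)ring: `h_d(l)`. -/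
noncomputable def completeHomog {R : Type*} [CommSemiring R] : List R → ℕ → R
  | [], 0 => 1
  | [], _ + 1 => 0
  | x :: l, d => ∑ t ∈ Finset.range (d + 1), x ^ t * completeHomog l (d - t)

/-- Elementary symmetric polynomial of degree `d` in a list of elements: `e_d(l)`. -/
noncomputable def elemSymm {R : Type*} [CommSemiring R] : List R → ℕ → R
  | _, 0 => 1
  | [], _ + 1 => 0
  | x :: l, d + 1 => elemSymm l (d + 1) + x * elemSymm l d

/-- The ideal of `(ZMod 2)[x_1, …, x_k]` generated by the complete homogeneous
symmetric polynomials `h_{m+i}(x_1, …, x_{k+1-i})` for `1 ≤ i ≤ k`. -/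
noncomputable def flagIdeal (k m : ℕ) : Ideal (MvPolynomial (Fin k) (ZMod 2)) :=
  Ideal.span { p | ∃ i : ℕ, 1 ≤ i ∧ i ≤ k ∧
    p = completeHomog (((List.finRange k).take (k + 1 - i)).map MvPolynomial.X) (m + i) }

/-- `R(k,m)`, the quotient of `(ZMod 2)[x_1, …, x_k]` by `flagIdeal k m`;
this is the mod-2 cohomology ring of the real flag manifold `F(1^k, m)`. -/
abbrev FlagRing (k m : ℕ) : Type :=
  MvPolynomial (Fin k) (ZMod 2) ⧸ flagIdeal k m

/-- The image of the variable `x_{j+1}` in `R(k,m)` (`j` is 0-indexed). -/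
noncomputable def xGen (k m : ℕ) (j : Fin k) : FlagRing k m :=
  Ideal.Quotient.mk (flagIdeal k m) (MvPolynomial.X j)

/-- The zero-divisor `z_{j+1} = x_{j+1} ⊗ 1 + 1 ⊗ x_{j+1}` in `R(k,m) ⊗ R(k,m)`. -/
noncomputable def zGen (k m : ℕ) (j : Fin k) :
    FlagRing k m ⊗[ZMod 2] FlagRing k m :=
  xGen k m j ⊗ₜ 1 + 1 ⊗ₜ xGen k m j

/-- `x_{i+1,j+1}` in the `s`-fold tensor power `R(k,m)^{⊗ s}`: the element having
`x_{j+1}` in the `(i+1)`-st tensor factor and `1` elsewhere (`i`, `j` 0-indexed). -/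
noncomputable def xT (k m s : ℕ) (i : Fin s) (j : Fin k) :
    ⨂[ZMod 2] _ : Fin s, FlagRing k m :=
  PiTensorProduct.tprod (ZMod 2) (fun t => if t = i then xGen k m j else 1)

/-- The `s`-th zero-divisor `z_{i+1,j+1} = x_{1,j+1} + x_{i+1,j+1}` in `R(k,m)^{⊗ s}`. -/
noncomputable def zT (k m s : ℕ) (hs : 0 < s) (i : Fin s) (j : Fin k) :
    ⨂[ZMod 2] _ : Fin s, FlagRing k m :=
  xT k m s ⟨0, hs⟩ j + xT k m s i j

/-- The generating series of `h_d(l)` is the product of the geometric series `∑ x ^ d * T ^ d`. -/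
theorem mk_completeHomog {R : Type*} [CommSemiring R] (l : List R) :
    PowerSeries.mk (completeHomog l) =
      (l.map fun x => PowerSeries.mk fun d => x ^ d).prod := by
  induction l with
  | nil =>
    ext d
    cases d <;> simp [completeHomog, PowerSeries.coeff_one]
  | cons x l ih =>
    rw [List.map_cons, List.prod_cons, ← ih]
    ext d
    rw [PowerSeries.coeff_mul, Finset.Nat.sum_antidiagonal_eq_sum_range_succ_mk]
    simp [completeHomog]

theorem completeHomog_perm {R : Type*} [CommSemiring R] {l l' : List R} (h : l.Perm l') (d : ℕ) :
    completeHomog l d = completeHomog l' d := by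
  have key : PowerSeries.mk (completeHomog l) = PowerSeries.mk (completeHomog l') := by
    rw [mk_completeHomog, mk_completeHomog]
    exact (h.map _).prod_eq
  simpa using congrArg (PowerSeries.coeff d) key

theorem completeHomog_cons_succ {R : Type*} [CommSemiring R] (x : R) (l : List R) (d : ℕ) :
    completeHomog (x :: l) (d + 1) = completeHomog l (d + 1) + x * completeHomog (x :: l) d := by
  rw [completeHomog, Finset.sum_range_succ', completeHomog, Finset.mul_sum, add_comm]
  congr 1
  · simp
  · refine Finset.sum_congr rfl fun t _ => ?_
    rw [Nat.add_sub_add_right, pow_succ']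
    ring

theorem map_completeHomog {R S : Type*} [CommSemiring R] [CommSemiring S] (f : R →+* S)
    (l : List R) (d : ℕ) : completeHomog (l.map f) d = f (completeHomog l d) := by
  induction l generalizing d with
  | nil => cases d <;> simp [completeHomog]
  | cons x l ih => simp [completeHomog, ih]

/-- Deleting `l₁.length` variables raises the degree bound for vanishing by `l₁.length`. -/
theorem completeHomog_eq_zero_of_append {R : Type*} [CommRing R] (l₁ l₂ : List R) (a : ℕ)
    (h : ∀ n, a < n → completeHomog (l₁ ++ l₂) n = 0) :
    ∀ n, a + l₁.length < n → completeHomog l₂ n = 0 := by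
  induction l₁ generalizing a with
  | nil => simpa using h
  | cons x l ih =>
    intro n hn
    refine ih (a + 1) (fun n hn => ?_) n (by rw [List.length_cons] at hn; omega)
    obtain ⟨n, rfl⟩ : ∃ n', n = n' + 1 := ⟨n - 1, by omega⟩
    have hrec := completeHomog_cons_succ x (l ++ l₂) n
    rw [← List.cons_append, h _ (by omega), h _ (by omega)] at hrec
    simpa using hrec.symm

/-- The defining relation of `R(k,m)` in the first `p` variables, of degree `m + (k - p) + 1`. -/
theorem completeHomog_prefix_relation (k m p : ℕ) (hp : 0 < p) (hpk : p ≤ k) :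
    completeHomog (((List.finRange k).take p).map (xGen k m)) (m + (k - p) + 1) = 0 := by
  have hmap : ((List.finRange k).take p).map (xGen k m) =
      (((List.finRange k).take p).map MvPolynomial.X).map (Ideal.Quotient.mk (flagIdeal k m)) := by
    rw [List.map_map]
    rfl
  rw [hmap, map_completeHomog, Ideal.Quotient.eq_zero_iff_mem]
  refine Ideal.subset_span ⟨k - p + 1, by omega, by omega, ?_⟩
  rw [show k + 1 - (k - p + 1) = p by omega, add_assoc]

/-- In `R(k,m)`, `h_n(x_1, …, x_p) = 0` as soon as `n > m + (k - p)`. -/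
theorem completeHomog_prefix_eq_zero (k m p : ℕ) (hpk : p ≤ k) (n : ℕ) (hn : m + (k - p) < n) :
    completeHomog (((List.finRange k).take p).map (xGen k m)) n = 0 := by
  induction p generalizing n with
  | zero =>
    obtain ⟨n, rfl⟩ : ∃ n', n = n' + 1 := ⟨n - 1, by omega⟩
    simp [completeHomog]
  | succ p ihp =>
    induction n, hn using Nat.le_induction with
    | base => exact completeHomog_prefix_relation k m (p + 1) (by omega) hpk
    | succ n hn ihn =>
      have hlt : p < (List.finRange k).length := by simpa using hpk
      have hperm : (((List.finRange k).take (p + 1)).map (xGen k m)).Perm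
          (xGen k m ((List.finRange k)[p]) :: ((List.finRange k).take p).map (xGen k m)) := by
        rw [List.take_succ_eq_append_getElem hlt, List.map_append]
        exact List.perm_append_comm
      rw [completeHomog_perm hperm] at ihn ⊢
      rw [completeHomog_cons_succ, ihn, ihp (by omega) _ (by omega), mul_zero, add_zero]

/-- for `0 ≤ j < i ≤ k` and any strictly increasing sequence
`ℓ : Fin (k - j) → Fin k`, the complete homogeneous symmetric polynomial
`h_{m+i}(x_{ℓ_1}, …, x_{ℓ_{k-j}})` vanishes in `R(k,m)`. -/
theorem statement2 (k m : ℕ) (hk : 0 < k) (hm : 0 < m) (i j : ℕ) (hj : j < i) (hi : i ≤ k)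
    (ℓ : Fin (k - j) → Fin k) (hℓ : StrictMono ℓ) :
    completeHomog ((List.finRange (k - j)).map (fun t => xGen k m (ℓ t))) (m + i) = 0 := by
  -- The complement of the chosen variables has exactly `j` elements.
  have hnodup : ((List.finRange (k - j)).map ℓ).Nodup :=
    (List.nodup_finRange _).map hℓ.injective
  obtain ⟨l, hl, hsub⟩ : ((List.finRange (k - j)).map ℓ).Subperm (List.finRange k) :=
    hnodup.subperm fun x _ => List.mem_finRange x
  obtain ⟨c, hc⟩ := hsub.exists_perm_append
  replace hc := hc.trans (hl.append_right c)
  have hlen : c.length = j := by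
    have := hc.length_eq
    simp only [List.length_append, List.length_map, List.length_finRange] at this
    omega
  have hfull : ∀ n, m < n → completeHomog
      (c.map (xGen k m) ++ ((List.finRange (k - j)).map ℓ).map (xGen k m)) n = 0 := by
    intro n hn
    rw [← List.map_append, completeHomog_perm ((List.perm_append_comm.trans hc.symm).map _)]
    have := completeHomog_prefix_eq_zero k m k le_rfl n (by omega)
    rwa [List.take_of_length_le (by simp)] at this
  have := completeHomog_eq_zero_of_append _ _ m hfull (m + i) (by rw [List.length_map]; omega)
  rwa [List.map_map] at this
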